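/- arXiv:2012.15065 — 2 statements merged into one kernel-verified Lean document; each statement's English description precedes it below -/
import Mathlib

section
/- Let m ≥ 3 and let A ≥ 0, B be integers with 16A + 8B - B² ≥ 0 such that it is NOT the case that (A ≡ 1 mod 2 and B ≡ 4 mod 8) and NOT the case that (A ≡ 0 mod 2 and B ≡ 0 mod 8). Then there exist integers x₁, x₂, x₃, x₄ with P_m(x₁) + P_m(x₂) + 2P_m(x₃) + 4P_m(x₄) = A(m-2) + B. -/
/-- The generalized `m`-gonal number `P_m(x) = ((m-2)x² - (m-4)x)/2`. -/
def polygonal (m x : ℤ) : ℤ := ((m - 2) * x ^ 2 - (m - 4) * x) / 2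

/-- Centered reduction of an integer modulo a positive integer. -/
lemma centered (a d : ℤ) (ha : 0 < a) : ∃ t : ℤ, 4 * (d + t * a) ^ 2 ≤ a ^ 2 := by
  refine ⟨-((2 * d + a) / (2 * a)), ?_⟩
  have h := Int.emod_add_mul_ediv (2 * d + a) (2 * a)
  have h1 := Int.emod_nonneg (2 * d + a) (show (2 * a) ≠ 0 by omega)
  have h2 := Int.emod_lt_of_pos (2 * d + a) (show 0 < 2 * a by omega)
  set k := (2 * d + a) / (2 * a)
  set r := (2 * d + a) % (2 * a)
  have h3 : 2 * (d + -k * a) = r - a := by linarith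
  have h4 : 4 * (d + -k * a) ^ 2 = (r - a) ^ 2 := by rw [← h3]; ring
  rw [h4]
  nlinarith

/-- Lagrange reduction of a positive definite binary form. -/
lemma binary_reduce (N : ℕ) : ∀ A B C D : ℤ, A.toNat ≤ N → 0 < A → 0 < D → A * C - B ^ 2 = D →
    ∃ p q r s : ℤ, p * s - q * r = 1 ∧ 0 < A * p ^ 2 + 2 * B * p * q + C * q ^ 2 ∧
      3 * (A * p ^ 2 + 2 * B * p * q + C * q ^ 2) ^ 2 ≤ 4 * D := by
  induction N with
  | zero => intro A B C D h hA; omega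
  | succ N ih =>
    intro A B C D h hA hD hdet
    obtain ⟨t, ht⟩ := centered A B hA
    set B' := B + t * A with hB'
    set C' := C + 2 * t * B + t ^ 2 * A with hC'
    have hdet' : A * C' - B' ^ 2 = D := by rw [← hdet, hB', hC']; ring
    by_cases hlt : C' < A
    · have hC'pos : 0 < C' := by
        by_contra hc
        push Not at hc
        nlinarith [sq_nonneg B']
      obtain ⟨p, q, r, s, h1, h2, h3⟩ := ih C' (-B') A D (by omega) hC'pos hD
        (by linarith [hdet', (by ring : C' * A - (-B') ^ 2 = A * C' - B' ^ 2)])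
      have key : A * (t * p - q) ^ 2 + 2 * B * (t * p - q) * p + C * p ^ 2
          = C' * p ^ 2 + 2 * (-B') * p * q + A * q ^ 2 := by
        rw [hB', hC']; ring
      refine ⟨t * p - q, p, t * r - s, r, by linarith, ?_, ?_⟩
      · rw [key]; exact h2
      · rw [key]; exact h3
    · push Not at hlt
      refine ⟨1, 0, 0, 1, by norm_num, by simpa using hA, ?_⟩
      have : A * A ≤ A * C' := by nlinarith
      nlinarith

/-- Every value of the ternary form is a sum of three squares. -/
def Sum3 (a b c d e f : ℤ) : Prop := ∀ x y z : ℤ, ∃ u v w : ℤ,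
  a * x ^ 2 + b * y ^ 2 + c * z ^ 2 + 2 * d * x * y + 2 * e * x * z + 2 * f * y * z
    = u ^ 2 + v ^ 2 + w ^ 2

lemma sum3_yz {a b c d e f : ℤ} (p q r s : ℤ) (h : p * s - q * r = 1)
    (H : Sum3 a (b * p ^ 2 + 2 * f * p * q + c * q ^ 2) (b * r ^ 2 + 2 * f * r * s + c * s ^ 2)
      (d * p + e * q) (d * r + e * s) (b * p * r + f * (p * s + q * r) + c * q * s)) :
    Sum3 a b c d e f := by
  intro x y z
  obtain ⟨u, v, w, h1⟩ := H x (s * y - r * z) (p * z - q * y)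
  refine ⟨u, v, w, ?_⟩
  rw [← h1]
  have hy : y = p * (s * y - r * z) + r * (p * z - q * y) := by linear_combination (-y) * h
  have hz : z = q * (s * y - r * z) + s * (p * z - q * y) := by linear_combination (-z) * h
  generalize s * y - r * z = Y at *
  generalize p * z - q * y = Z at *
  rw [hy, hz]; ring

lemma sum3_x {a b c d e f : ℤ} (t k : ℤ)
    (H : Sum3 a (b + 2 * t * d + t ^ 2 * a) (c + 2 * k * e + k ^ 2 * a)
      (d + t * a) (e + k * a) (f + t * e + k * d + t * k * a)) :
    Sum3 a b c d e f := by
  intro x y z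
  obtain ⟨u, v, w, h1⟩ := H (x - t * y - k * z) y z
  exact ⟨u, v, w, by rw [← h1]; ring⟩

lemma sum3_swap {a b c d e f : ℤ} (H : Sum3 b a c d f e) : Sum3 a b c d e f := by
  intro x y z
  obtain ⟨u, v, w, h1⟩ := H y x z
  exact ⟨u, v, w, by rw [← h1]; ring⟩

/-- Hermite reduction: a positive definite ternary form of determinant one. -/
lemma ternary (N : ℕ) : ∀ a b c d e f : ℤ, a.toNat ≤ N → 0 < a → 0 < a * b - d ^ 2 →
    a * b * c + 2 * d * e * f - a * f ^ 2 - b * e ^ 2 - c * d ^ 2 = 1 → Sum3 a b c d e f := by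
  induction N with
  | zero => intro a b c d e f h ha; omega
  | succ N ih =>
    intro a b c d e f h ha hA hdet
    obtain ⟨p, q, r, s, h1, h2, h3⟩ := binary_reduce _ (a * b - d ^ 2) (a * f - d * e)
      (a * c - e ^ 2) a le_rfl hA ha (by linear_combination a * hdet)
    apply sum3_yz p q r s h1
    have hA' : a * (b * p ^ 2 + 2 * f * p * q + c * q ^ 2) - (d * p + e * q) ^ 2
      = (a * b - d ^ 2) * p ^ 2 + 2 * (a * f - d * e) * p * q + (a * c - e ^ 2) * q ^ 2 := by ring
    rw [← hA'] at h2 h3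
    have hdet' : a * (b * p ^ 2 + 2 * f * p * q + c * q ^ 2) *
          (b * r ^ 2 + 2 * f * r * s + c * s ^ 2)
        + 2 * (d * p + e * q) * (d * r + e * s) * (b * p * r + f * (p * s + q * r) + c * q * s)
        - a * (b * p * r + f * (p * s + q * r) + c * q * s) ^ 2
        - (b * p ^ 2 + 2 * f * p * q + c * q ^ 2) * (d * r + e * s) ^ 2
        - (b * r ^ 2 + 2 * f * r * s + c * s ^ 2) * (d * p + e * q) ^ 2 = 1 := by
      have : (p * s - q * r) ^ 2 *
        (a * b * c + 2 * d * e * f - a * f ^ 2 - b * e ^ 2 - c * d ^ 2) = 1 := by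
        rw [h1, hdet]; norm_num
      linear_combination this
    clear hA hA' hdet
    generalize b * p ^ 2 + 2 * f * p * q + c * q ^ 2 = b1 at *
    generalize b * r ^ 2 + 2 * f * r * s + c * s ^ 2 = c1 at *
    generalize b * p * r + f * (p * s + q * r) + c * q * s = f1 at *
    generalize d * p + e * q = d1 at *
    generalize d * r + e * s = e1 at *
    obtain ⟨t, ht⟩ := centered a d1 ha
    obtain ⟨k, hk⟩ := centered a e1 ha
    apply sum3_x t k
    have hA2 : a * (b1 + 2 * t * d1 + t ^ 2 * a) - (d1 + t * a) ^ 2 = a * b1 - d1 ^ 2 := by ring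
    rw [← hA2] at h2 h3
    have hdet2 : a * (b1 + 2 * t * d1 + t ^ 2 * a) * (c1 + 2 * k * e1 + k ^ 2 * a)
        + 2 * (d1 + t * a) * (e1 + k * a) * (f1 + t * e1 + k * d1 + t * k * a)
        - a * (f1 + t * e1 + k * d1 + t * k * a) ^ 2
        - (b1 + 2 * t * d1 + t ^ 2 * a) * (e1 + k * a) ^ 2
        - (c1 + 2 * k * e1 + k ^ 2 * a) * (d1 + t * a) ^ 2 = 1 := by
      linear_combination hdet'
    clear hA2 hdet'
    generalize b1 + 2 * t * d1 + t ^ 2 * a = b2 at *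
    generalize c1 + 2 * k * e1 + k ^ 2 * a = c2 at *
    generalize f1 + t * e1 + k * d1 + t * k * a = f2 at *
    generalize d1 + t * a = d2 at *
    generalize e1 + k * a = e2 at *
    by_cases hlt : b2 < a
    · apply sum3_swap
      have hb2 : 0 < b2 := by
        by_contra hc
        push Not at hc
        nlinarith [sq_nonneg d2]
      exact ih b2 a c2 d2 f2 e2 (by omega) hb2 (by linarith [mul_comm a b2])
        (by linear_combination hdet2)
    · push Not at hlt
      have e1 : 3 * a ^ 2 ≤ 4 * (a * b2 - d2 ^ 2) := by nlinarith
      have ha1 : a = 1 := by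
        by_contra hne
        have h2a : 2 ≤ a := by omega
        generalize a * b2 - d2 ^ 2 = X at *
        have h5 : (3 * a ^ 2) ^ 2 ≤ (4 * X) ^ 2 := by
          apply pow_le_pow_left₀ (by positivity) e1
        have h6 : 27 * a ^ 4 ≤ 64 * a := by nlinarith
        have h7 : 8 ≤ a ^ 3 := by
          calc (8:ℤ) = 2 ^ 3 := by norm_num
            _ ≤ a ^ 3 := pow_le_pow_left₀ (by norm_num) h2a 3
        nlinarith
      subst ha1
      have hd0 : d2 = 0 := by
        by_contra hne
        have : 0 < d2 ^ 2 := by positivity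
        omega
      have he0 : e2 = 0 := by
        by_contra hne
        have : 0 < e2 ^ 2 := by positivity
        omega
      subst hd0 he0
      have hb1 : b2 = 1 := by nlinarith
      subst hb1
      have hc2 : c2 = 1 + f2 ^ 2 := by linarith
      subst hc2
      intro x y z
      exact ⟨x, y + f2 * z, z, by ring⟩

/-- Every positive integer congruent to two modulo four is a sum of three squares. -/
lemma three_sq (n : ℤ) (hn : 0 < n) (h4 : n % 4 = 2) :
    ∃ u v w : ℤ, n = u ^ 2 + v ^ 2 + w ^ 2 := by
  obtain ⟨k, hk⟩ : ∃ k, n = 4 * k + 2 := ⟨n / 4, by omega⟩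
  have hcop : IsCoprime (n - 1) (((4 * n).toNat : ℕ) : ℤ) := by
    rw [Int.toNat_of_nonneg (by omega)]
    exact ⟨1 + 4 * k, -k, by rw [hk]; ring⟩
  obtain ⟨p, hpn, hp, hmod⟩ := Nat.forall_exists_prime_gt_and_zmodEq n.toNat
    (q := (4 * n).toNat) (a := n - 1) (by omega) hcop
  rw [Int.toNat_of_nonneg (by omega)] at hmod
  obtain ⟨j, hj⟩ := hmod.symm.dvd
  have hjpos : 0 ≤ j := by
    by_contra hc
    push Not at hc
    have : 4 * n * j ≤ 4 * n * (-1) := by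
      apply mul_le_mul_of_nonneg_left <;> omega
    omega
  obtain ⟨b, hb⟩ : ∃ b : ℕ, (b : ℤ) = 4 * j + 1 := ⟨(4 * j + 1).toNat, by omega⟩
  have hpb : (p : ℤ) = b * n - 1 := by rw [hb]; linarith
  have hp4 : p % 4 = 1 := by
    have : (p : ℤ) = 4 * (n * j + k) + 1 := by linarith
    omega
  have hb4 : b % 4 = 1 := by omega
  have hpodd : Odd p := Nat.odd_iff.mpr (by omega)
  have hbodd : Odd b := Nat.odd_iff.mpr (by omega)
  have : Fact p.Prime := ⟨hp⟩
  have hJ : jacobiSym (-(b : ℤ)) p = 1 := by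
    rw [jacobiSym.neg _ hpodd, ZMod.χ₄_nat_one_mod_four hp4, one_mul,
      jacobiSym.quadratic_reciprocity_one_mod_four hb4 hpodd]
    have : jacobiSym (p : ℤ) b = jacobiSym (-1) b := by
      apply jacobiSym.mod_left'
      rw [hpb]
      apply Int.ModEq.symm
      apply (Int.modEq_iff_dvd).mpr
      exact ⟨n, by ring⟩
    rw [this, jacobiSym.at_neg_one hbodd, ZMod.χ₄_nat_one_mod_four hb4]
  rw [← jacobiSym.legendreSym.to_jacobiSym] at hJ
  have hne : ((-(b : ℤ) : ℤ) : ZMod p) ≠ 0 := by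
    intro h0
    rw [(legendreSym.eq_zero_iff p _).mpr h0] at hJ
    norm_num at hJ
  obtain ⟨y, hy⟩ := (legendreSym.eq_one_iff p hne).mp hJ
  obtain ⟨d, rfl⟩ := ZMod.intCast_surjective y
  have hdvd : (p : ℤ) ∣ d ^ 2 + b := by
    rw [← ZMod.intCast_zmod_eq_zero_iff_dvd]
    push_cast at hy ⊢
    linear_combination -hy
  obtain ⟨a, ha⟩ := hdvd
  have hbpos : (0 : ℤ) < b := by omega
  have hppos : (0 : ℤ) < p := by exact_mod_cast hp.pos
  have hapos : 0 < a := by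
    by_contra hc
    push Not at hc
    nlinarith [sq_nonneg d]
  have := ternary _ a p n d 1 0 le_rfl hapos (by nlinarith)
    (by linear_combination (-n) * ha - hpb)
  obtain ⟨u, v, w, h⟩ := this 0 0 1
  exact ⟨u, v, w, by linarith⟩

lemma sq_mod (x : ℤ) : (x % 2 = 0 ∧ x ^ 2 % 4 = 0) ∨
    ((x % 8 = 1 ∨ x % 8 = 7) ∧ x ^ 2 % 16 = 1) ∨ ((x % 8 = 3 ∨ x % 8 = 5) ∧ x ^ 2 % 16 = 9) := by
  obtain ⟨k, r, hx, h0, h1⟩ : ∃ k r : ℤ, x = 8 * k + r ∧ 0 ≤ r ∧ r < 8 :=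
    ⟨x / 8, x % 8, by omega, by omega, by omega⟩
  have e : x ^ 2 = 16 * (4 * k ^ 2 + k * r) + r ^ 2 := by rw [hx]; ring
  rw [e]
  generalize 4 * k ^ 2 + k * r = t
  interval_cases r <;> omega

/-- Odd positive integers are represented by `c² + 2b² + 4a²`. -/
lemma rep124 (D : ℤ) (hD : 0 < D) (h2 : D % 2 = 1) :
    ∃ a b c : ℤ, D = c ^ 2 + 2 * b ^ 2 + 4 * a ^ 2 := by
  have key : ∀ p q r : ℤ, 2 * D = p ^ 2 + q ^ 2 + r ^ 2 → p % 2 = 1 → q % 2 = 1 → r % 2 = 0 →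
      ∃ a b c : ℤ, D = c ^ 2 + 2 * b ^ 2 + 4 * a ^ 2 := by
    have key0 : ∀ p q r : ℤ, 2 * D = p ^ 2 + q ^ 2 + r ^ 2 → (p - q) % 4 = 0 → r % 2 = 0 →
      ∃ a b c : ℤ, D = c ^ 2 + 2 * b ^ 2 + 4 * a ^ 2 := by
      intro p q r h h1 h3
      obtain ⟨a, ha⟩ : ∃ a, p = q + 4 * a := ⟨(p - q) / 4, by omega⟩
      obtain ⟨b, hb⟩ : ∃ b, r = 2 * b := ⟨r / 2, by omega⟩
      refine ⟨a, b, q + 2 * a, ?_⟩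
      rw [ha, hb] at h
      linarith
    intro p q r h h1 h3 h5
    by_cases hc : (p - q) % 4 = 0
    · exact key0 p q r h hc h5
    · exact key0 p (-q) r (by rw [h]; ring) (by omega) h5
  obtain ⟨u, v, w, h⟩ := three_sq (2 * D) (by omega) (by omega)
  have hcases : (u % 2 = 1 ∧ v % 2 = 1 ∧ w % 2 = 0) ∨ (u % 2 = 1 ∧ v % 2 = 0 ∧ w % 2 = 1) ∨
      (u % 2 = 0 ∧ v % 2 = 1 ∧ w % 2 = 1) := by
    have hu := sq_mod u
    have hv := sq_mod v
    have hw := sq_mod w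
    generalize u ^ 2 = U at *
    generalize v ^ 2 = V at *
    generalize w ^ 2 = W at *
    omega
  rcases hcases with ⟨h1, h2, h3⟩ | ⟨h1, h2, h3⟩ | ⟨h1, h2, h3⟩
  · exact key u v w h h1 h2 h3
  · exact key u w v (by rw [h]; ring) h1 h3 h2
  · exact key v w u (by rw [h]; ring) h2 h3 h1

lemma two_polygonal (m x : ℤ) : 2 * polygonal m x = (m - 2) * (x ^ 2 - x) + 2 * x := by
  unfold polygonal
  have : (2 : ℤ) ∣ (m - 2) * x ^ 2 - (m - 4) * x := by
    have h : (2 : ℤ) ∣ x * (x - 1) := (Int.even_mul_pred_self x).two_dvd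
    obtain ⟨k, hk⟩ := h
    exact ⟨(m - 2) * k + x, by linear_combination (m - 2) * hk⟩
  rw [Int.mul_ediv_cancel' this]
  ring

lemma build (m A B a b c : ℤ) (h : 16 * A + 8 * B - B ^ 2 = c ^ 2 + 2 * b ^ 2 + 4 * a ^ 2)
    (h1 : (B - c) % 8 = 0) (h2 : (B + c - 2 * b) % 8 = 0)
    (h3 : (B + c + 2 * b - 4 * a) % 8 = 0) :
    ∃ x₁ x₂ x₃ x₄ : ℤ,
      polygonal m x₁ + polygonal m x₂ + 2 * polygonal m x₃ + 4 * polygonal m x₄ =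
        A * (m - 2) + B := by
  obtain ⟨k, hk⟩ : ∃ k, B - c = 8 * k := ⟨(B - c) / 8, by omega⟩
  obtain ⟨j, hj⟩ : ∃ j, B + c - 2 * b = 8 * j := ⟨(B + c - 2 * b) / 8, by omega⟩
  obtain ⟨i, hi⟩ : ∃ i, B + c + 2 * b - 4 * a = 8 * i :=
    ⟨(B + c + 2 * b - 4 * a) / 8, by omega⟩
  refine ⟨i + a, i, j, k, ?_⟩
  have hB : B = 2 * i + a + 2 * j + 4 * k := by omega
  have hc : c = 2 * i + a + 2 * j - 4 * k := by omega
  have hb : b = 2 * i + a - 2 * j := by omega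
  have hQ : (i + a) ^ 2 + i ^ 2 + 2 * j ^ 2 + 4 * k ^ 2 = 2 * A + B := by
    have : 8 * ((i + a) ^ 2 + i ^ 2 + 2 * j ^ 2 + 4 * k ^ 2) = 8 * (2 * A + B) := by
      have e : 8 * (2 * A + B) = c ^ 2 + 2 * b ^ 2 + 4 * a ^ 2 + B ^ 2 := by linarith
      rw [e, hB, hc, hb]; ring
    linarith
  have g1 := two_polygonal m (i + a)
  have g2 := two_polygonal m i
  have g3 := two_polygonal m j
  have g4 := two_polygonal m k
  have : 2 * (polygonal m (i + a) + polygonal m i + 2 * polygonal m j + 4 * polygonal m k)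
      = 2 * (A * (m - 2) + B) := by
    linear_combination g1 + g2 + 2 * g3 + 4 * g4 + (m - 2) * hQ + (m - 4) * hB
  linarith

theorem rep_1124 (m : ℤ) (hm : 3 ≤ m) (A B : ℤ) (hA : 0 ≤ A)
    (hd : 0 ≤ 16 * A + 8 * B - B ^ 2)
    (h1 : ¬ (A % 2 = 1 ∧ B % 8 = 4))
    (h2 : ¬ (A % 2 = 0 ∧ B % 8 = 0)) :
    ∃ x₁ x₂ x₃ x₄ : ℤ,
      polygonal m x₁ + polygonal m x₂ + 2 * polygonal m x₃ + 4 * polygonal m x₄ =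
        A * (m - 2) + B := by
  have hcase : B % 2 = 1 ∨ B % 4 = 2 ∨ B % 4 = 0 := by omega
  rcases hcase with hB | hB | hB
  · -- B is odd
    have hBs := sq_mod B
    obtain ⟨a, b, c, h⟩ := rep124 (16 * A + 8 * B - B ^ 2)
      (by generalize B ^ 2 = X at *; omega) (by generalize B ^ 2 = X at *; omega)
    have ha := sq_mod a
    have hb := sq_mod b
    have hc := sq_mod c
    have hao : a % 2 = 1 ∧ b % 2 = 1 ∧ ((B - c) % 8 = 0 ∨ (B + c) % 8 = 0) := by
      clear h1 h2 hd
      generalize a ^ 2 = X at *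
      generalize b ^ 2 = Y at *
      generalize c ^ 2 = Z at *
      generalize B ^ 2 = W at *
      have hb1 : b % 2 = 1 := by omega
      have ha1 : a % 2 = 1 := by omega
      refine ⟨ha1, hb1, ?_⟩
      have hX : X % 8 = 1 := by omega
      have hY : Y % 8 = 1 := by omega
      have hZ : (Z - W) % 16 = 0 := by omega
      omega
    clear ha hb hc hBs
    obtain ⟨ha, hb, hc⟩ := hao
    obtain ⟨c', hc2, hc'⟩ : ∃ c', c' ^ 2 = c ^ 2 ∧ (B - c') % 8 = 0 := by
      rcases hc with hc | hc
      · exact ⟨c, rfl, hc⟩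
      · exact ⟨-c, by ring, by omega⟩
    obtain ⟨b', hb2, hb'⟩ : ∃ b', b' ^ 2 = b ^ 2 ∧ (B + c' - 2 * b') % 8 = 0 := by
      by_cases h8 : (B + c' - 2 * b) % 8 = 0
      · exact ⟨b, rfl, h8⟩
      · exact ⟨-b, by ring, by omega⟩
    exact build m A B a b' c' (by rw [hc2, hb2]; exact h) hc' hb' (by omega)
  · -- B is twice an odd number
    obtain ⟨C, rfl⟩ : ∃ C, B = 2 * C := ⟨B / 2, by omega⟩
    have hCs := sq_mod C
    have e : 16 * A + 8 * (2 * C) - (2 * C) ^ 2 = 4 * (4 * A + 4 * C - C ^ 2) := by ring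
    rw [e] at hd
    obtain ⟨a, b, c, h⟩ := rep124 (4 * A + 4 * C - C ^ 2)
      (by generalize C ^ 2 = X at *; omega) (by generalize C ^ 2 = X at *; omega)
    have ha := sq_mod a
    have hb := sq_mod b
    have hc := sq_mod c
    have hbo : b % 2 = 1 ∧ c % 2 = 1 := by
      clear h1 h2 hd e
      generalize a ^ 2 = X at *
      generalize b ^ 2 = Y at *
      generalize c ^ 2 = Z at *
      generalize C ^ 2 = W at *
      have hc1 : c % 2 = 1 := by omega
      refine ⟨?_, hc1⟩
      omega
    clear ha hb hc hCs
    obtain ⟨c', hc2, hc'⟩ : ∃ c', c' ^ 2 = c ^ 2 ∧ (C - c') % 4 = 0 := by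
      by_cases h8 : (C - c) % 4 = 0
      · exact ⟨c, rfl, h8⟩
      · exact ⟨-c, by ring, by omega⟩
    exact build m A (2 * C) (2 * a) (2 * b) (2 * c')
      (by rw [e, h, ← hc2]; ring) (by omega) (by omega) (by omega)
  · -- B is divisible by four
    obtain ⟨C, rfl⟩ : ∃ C, B = 4 * C := ⟨B / 4, by omega⟩
    have hCs := sq_mod C
    have e : 16 * A + 8 * (4 * C) - (4 * C) ^ 2 = 16 * (A + 2 * C - C ^ 2) := by ring
    rw [e] at hd
    obtain ⟨a, b, c, h⟩ := rep124 (A + 2 * C - C ^ 2)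
      (by generalize C ^ 2 = X at *; omega) (by generalize C ^ 2 = X at *; omega)
    have hc := sq_mod c
    have hc1 : c % 2 = 1 := by
      generalize a ^ 2 = X at *
      generalize b ^ 2 = Y at *
      generalize c ^ 2 = Z at *
      generalize C ^ 2 = W at *
      omega
    clear hc hCs
    by_cases hC : C % 2 = 1
    · exact build m A (4 * C) (2 * (2 * a)) (4 * b) (4 * c)
        (by rw [e, h]; ring) (by omega) (by omega) (by omega)
    · exact build m A (4 * C) (2 * c) (4 * b) (4 * (2 * a))
        (by rw [e, h]; ring) (by omega) (by omega) (by omega)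
end

section
/- Let m ≥ 3 and let A ≥ 0, B be integers with 16A + 8B - B² ≥ 0 and B ≢ 0 mod 4. Then there exist integers x₁, x₂, x₃, x₄ with P_m(x₁) + 2P_m(x₂) + 2P_m(x₃) + 3P_m(x₄) = A(m-2) + B. -/
theorem round_ex (T a : ℤ) (hT : 0 < T) : ∃ c, -T ≤ 2 * (a - T * c) ∧ 2 * (a - T * c) ≤ T := by
  refine ⟨(2 * a + T) / (2 * T), ?_⟩
  have h1 := Int.emod_add_mul_ediv (2 * a + T) (2 * T)
  have h2 := Int.emod_nonneg (2 * a + T) (b := 2 * T) (by omega)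
  have h3 := Int.emod_lt_of_pos (2 * a + T) (b := 2 * T) (by omega)
  constructor <;> nlinarith

theorem hex_aux (T a b : ℤ) (hT : 0 < T) (ha : 0 ≤ a) (hab : a ≤ b)
    (hb2 : 2 * b ≤ T) (h : 3 * T ^ 2 ≤ 8 * (a ^ 2 + a * b + b ^ 2)) :
    8 * (a ^ 2 + a * (b - T) + (b - T) ^ 2) < 3 * T ^ 2 := by
  have h1 : T ≤ 6 * a := by
    by_contra hc
    push Not at hc
    nlinarith
  have h2 : T ≤ 3 * b := by
    by_contra hc
    push Not at hc
    nlinarith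
  have p1 := mul_nonneg (sub_nonneg.2 h1) (sub_nonneg.2 hb2)
  have p2 := mul_nonneg (sub_nonneg.2 h2) (sub_nonneg.2 hb2)
  have p3 := mul_nonneg (sub_nonneg.2 h1) (sub_nonneg.2 hab)
  have p4 := mul_nonneg (sub_nonneg.2 h2) (sub_nonneg.2 hab)
  have p5 := mul_nonneg (sub_nonneg.2 hb2) (sub_nonneg.2 hab)
  have p6 := mul_nonneg (sub_nonneg.2 h1) (sub_nonneg.2 h2)
  have p7 := mul_pos hT hT
  nlinarith

theorem hex_pos (T a b : ℤ) (hT : 0 < T) (ha : 0 ≤ a) (hb : 0 ≤ b) (ha2 : 2 * a ≤ T)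
    (hb2 : 2 * b ≤ T) :
    ∃ c d : ℤ, 8 * ((a - T * c) ^ 2 + (a - T * c) * (b - T * d) + (b - T * d) ^ 2) < 3 * T ^ 2 := by
  by_cases h : 8 * (a ^ 2 + a * b + b ^ 2) < 3 * T ^ 2
  · exact ⟨0, 0, by simpa using h⟩
  push Not at h
  rcases le_total a b with hab | hab
  · refine ⟨0, 1, ?_⟩
    have := hex_aux T a b hT ha hab hb2 h
    linarith
  · refine ⟨1, 0, ?_⟩
    have := hex_aux T b a hT hb hab ha2 (by linarith)
    linarith

theorem hex_zero (u v : ℤ) (h : u ^ 2 + u * v + v ^ 2 = 0) : u = 0 ∧ v = 0 := by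
  have e3 : u = 0 := by
    have : u ^ 2 = 0 := by nlinarith [sq_nonneg (u + 2 * v), sq_nonneg u]
    simpa using this
  subst e3
  simpa using h

theorem hex_ex (T a b : ℤ) (hT : 0 < T) :
    ∃ c d : ℤ, 8 * ((a - T * c) ^ 2 + (a - T * c) * (b - T * d) + (b - T * d) ^ 2) < 3 * T ^ 2 := by
  obtain ⟨c, hc1, hc2⟩ := round_ex T a hT
  obtain ⟨d, hd1, hd2⟩ := round_ex T b hT
  obtain ⟨a', ha'⟩ : ∃ a', a' = a - T * c := ⟨_, rfl⟩
  obtain ⟨b', hb'⟩ : ∃ b', b' = b - T * d := ⟨_, rfl⟩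
  rw [← ha'] at hc1 hc2
  rw [← hb'] at hd1 hd2
  rcases le_total 0 a' with h1 | h1 <;> rcases le_total 0 b' with h2 | h2
  · obtain ⟨e, f, h⟩ := hex_pos T a' b' hT h1 h2 hc2 hd2
    refine ⟨c + e, d + f, ?_⟩
    rw [ha', hb'] at h
    convert h using 2; ring
  · refine ⟨c, d, ?_⟩
    rw [← ha', ← hb']
    rcases le_total a' (-b') with h | h <;> nlinarith
  · refine ⟨c, d, ?_⟩
    rw [← ha', ← hb']
    rcases le_total (-a') b' with h | h <;> nlinarith
  · obtain ⟨e, f, h⟩ := hex_pos T (-a') (-b') hT (by omega) (by omega) (by omega) (by omega)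
    refine ⟨c - e, d - f, ?_⟩
    rw [ha', hb'] at h
    convert h using 2; ring

theorem dc (n : ℤ) (k : ℕ) : ∀ (T x a b : ℤ), 0 < T → T.toNat = k →
    n * T ^ 2 = x ^ 2 + 2 * (a ^ 2 + a * b + b ^ 2) →
    ∃ x a b : ℤ, n = x ^ 2 + 2 * (a ^ 2 + a * b + b ^ 2) := by
  induction k using Nat.strong_induction_on with
  | _ k ih =>
  intro T x a b hT hk h
  obtain ⟨c, hc1, hc2⟩ := round_ex T x hT
  obtain ⟨d, e, hde⟩ := hex_ex T a b hT
  -- polar form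
  obtain ⟨P, hP⟩ : ∃ P, P = 2 * x * c + 2 * (2 * a * d + a * e + b * d + 2 * b * e) := ⟨_, rfl⟩
  obtain ⟨F, hF⟩ : ∃ F, F = c ^ 2 + 2 * (d ^ 2 + d * e + e ^ 2) := ⟨_, rfl⟩
  obtain ⟨S, hS⟩ : ∃ S, S = T * F + n * T - P := ⟨_, rfl⟩
  have key : (x - T * c) ^ 2 + 2 * ((a - T * d) ^ 2 + (a - T * d) * (b - T * e) + (b - T * e) ^ 2)
      = T * S := by
    rw [hS, hP, hF]; linear_combination -h
  have hx : 4 * (x - T * c) ^ 2 ≤ T ^ 2 := by nlinarith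
  have hlt : T * S < T * T := by
    have := mul_pos hT hT
    linarith
  have hlt' : S < T := lt_of_mul_lt_mul_left hlt hT.le
  have hQ : 0 ≤ (a - T * d) ^ 2 + (a - T * d) * (b - T * e) + (b - T * e) ^ 2 := by
    nlinarith [sq_nonneg ((a - T * d) + (b - T * e)), sq_nonneg (a - T * d), sq_nonneg (b - T * e)]
  have h0 : 0 ≤ T * S := by
    have := sq_nonneg (x - T * c)
    linarith
  have h0' : 0 ≤ S := nonneg_of_mul_nonneg_right h0 hT
  rcases h0'.eq_or_lt with hz | hpos
  · rw [← hz, mul_zero] at key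
    have e1 : x - T * c = 0 := by
      have : (x - T * c) ^ 2 = 0 := le_antisymm (by linarith) (sq_nonneg _)
      exact pow_eq_zero_iff (two_ne_zero) |>.1 this
    have e2 : (a - T * d) ^ 2 + (a - T * d) * (b - T * e) + (b - T * e) ^ 2 = 0 := by
      have := sq_nonneg (x - T * c)
      linarith
    obtain ⟨e3, e4⟩ := hex_zero _ _ e2
    refine ⟨c, d, e, ?_⟩
    have hT2 : T ^ 2 ≠ 0 := by positivity
    apply mul_right_cancel₀ hT2
    rw [h, show x = T * c by linarith, show a = T * d by linarith, show b = T * e by linarith]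
    ring
  · refine ih S.toNat (by omega) S ((F - n) * x + (2 * n * T - P) * c)
      ((F - n) * a + (2 * n * T - P) * d) ((F - n) * b + (2 * n * T - P) * e) hpos rfl ?_
    have hSe : S = (F - n) * T + (2 * n * T - P) := by rw [hS]; ring
    rw [hSe]
    linear_combination (F - n) ^ 2 * h + (2 * n * T - P) * (F - n) * hP
      + (2 * n * T - P) ^ 2 * hF

theorem hex_to (a b : ℤ) : ∃ y z : ℤ, a ^ 2 + a * b + b ^ 2 = y ^ 2 + 3 * z ^ 2 := by
  rcases Int.even_or_odd' a with ⟨c, rfl | rfl⟩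
  · exact ⟨b + c, c, by ring⟩
  · rcases Int.even_or_odd' b with ⟨d, rfl | rfl⟩
    · exact ⟨2 * c + 1 + d, d, by ring⟩
    · exact ⟨c - d, c + d + 1, by ring⟩

theorem exists_q (n : ℕ) (hn : n % 4 = 3) : ∃ q : ℕ, q.Prime ∧ q % 2 = 1 ∧ q % 3 = 1 ∧
    n ∣ q + 2 ∧ IsSquare (n : ZMod q) := by
  obtain ⟨r, e, he, hr, h4⟩ : ∃ r e, (n % 8 = 3 ∧ e = 1 ∨ n % 8 = 7 ∧ e = 3) ∧
      r + 2 = 3 * n * (4 - e) ∧ r % 4 = e := by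
    rcases (show n % 8 = 3 ∨ n % 8 = 7 by omega) with h | h
    · exact ⟨9 * n - 2, 1, by simp [h], by omega, by omega⟩
    · exact ⟨3 * n - 2, 3, by simp [h], by omega, by omega⟩
  have hro : r % 2 = 1 := by omega
  have hcop : Nat.Coprime r (12 * n) := by
    apply Nat.Coprime.mul_right
    · have h3 : r % 3 = 1 := by
        have : r + 2 = 3 * (n * (4 - e)) := by rw [hr]; ring
        omega
      have : Nat.gcd r 12 = 1 := by
        rw [Nat.gcd_comm, Nat.gcd_rec]
        have h12 : r % 12 = 1 ∨ r % 12 = 7 := by omega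
        rcases h12 with h | h <;> rw [h] <;> rfl
      exact this
    · apply Nat.Coprime.symm
      have h2 : Nat.Coprime n 2 := by
        rw [Nat.coprime_two_right]; exact Nat.odd_iff.2 (by omega)
      have hg : Nat.gcd n r ∣ 2 := by
        have h1 : Nat.gcd n r ∣ r + 2 := by
          rw [hr]; exact ((Nat.gcd_dvd_left n r).mul_left 3).mul_right _
        exact (Nat.dvd_add_right (Nat.gcd_dvd_right n r)).1 h1
      have := Nat.dvd_gcd (Nat.gcd_dvd_left n r) hg
      rw [Nat.Coprime] at h2
      rw [h2] at this
      exact Nat.dvd_one.1 this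
  obtain ⟨q, hq, hqp, hmod⟩ := Nat.forall_exists_prime_gt_and_modEq 3 (by omega : 12 * n ≠ 0) hcop
  have m4 : q % 4 = e := by
    have : q ≡ r [MOD 4] := hmod.of_dvd ⟨3 * n, by ring⟩
    rw [← h4]; exact this
  have m3 : q % 3 = 1 := by
    have h1 : q ≡ r [MOD 3] := hmod.of_dvd ⟨4 * n, by ring⟩
    have h2 : q % 3 = r % 3 := h1
    have : r + 2 = 3 * (n * (4 - e)) := by rw [hr]; ring
    omega
  have mn : n ∣ q + 2 := by
    have h1 : q ≡ r [MOD n] := hmod.of_dvd ⟨12, by ring⟩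
    have h2 : q + 2 ≡ r + 2 [MOD n] := h1.add_right 2
    have h3 : n ∣ r + 2 := by rw [hr]; exact ⟨3 * (4 - e), by ring⟩
    exact (h2.dvd_iff dvd_rfl).2 h3
  refine ⟨q, hqp, by omega, m3, mn, ?_⟩
  have := Fact.mk hqp
  have no : Odd n := Nat.odd_iff.2 (by omega)
  have e1 : jacobiSym q n = ZMod.χ₈' n := by
    rw [← jacobiSym.at_neg_two no]
    apply jacobiSym.mod_left'
    change (q : ℤ) ≡ -2 [ZMOD n]
    apply Int.ModEq.symm
    rw [Int.modEq_iff_dvd]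
    have : (n : ℤ) ∣ ((q + 2 : ℕ) : ℤ) := by exact_mod_cast mn
    simpa using this
  have e2 : ZMod.χ₈' (n : ZMod 8) = if n % 8 = 3 then 1 else -1 := by
    rcases he with ⟨h, -⟩ | ⟨h, -⟩
    · rw [← ZMod.natCast_mod, h]; rfl
    · rw [← ZMod.natCast_mod, h]; rfl
  have e3 : jacobiSym n q = 1 := by
    rcases he with ⟨h, h'⟩ | ⟨h, h'⟩
    · rw [← jacobiSym.quadratic_reciprocity_one_mod_four (by omega) no, e1, e2, if_pos h]
    · rw [jacobiSym.quadratic_reciprocity_three_mod_four (by omega) (by omega), e1, e2, if_neg (by omega)]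
      rfl
  rw [← jacobiSym.legendreSym.to_jacobiSym] at e3
  have hne : ((n : ℤ) : ZMod q) ≠ 0 := by
    intro h0
    rw [(legendreSym.eq_zero_iff q n).2 h0] at e3
    exact zero_ne_one e3
  simpa using (legendreSym.eq_one_iff q hne).1 e3

theorem neg_three_sq (q : ℕ) (hq : q.Prime) (h2 : q % 2 = 1) (h3 : q % 3 = 1) :
    ∃ β : ℤ, (q : ℤ) ∣ β ^ 2 + 3 := by
  have := Fact.mk hq
  have qo : Odd q := Nat.odd_iff.2 h2
  have e0 : jacobiSym q 3 = 1 := by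
    rw [jacobiSym.mod_left, show (q : ℤ) % ((3 : ℕ) : ℤ) = 1 by push_cast; omega,
      jacobiSym.one_left]
  have e3 : jacobiSym (-3) q = 1 := by
    rw [show (-3 : ℤ) = -1 * ((3 : ℕ) : ℤ) by norm_num, jacobiSym.mul_left, jacobiSym.at_neg_one qo]
    rcases (show q % 4 = 1 ∨ q % 4 = 3 by omega) with h | h
    · rw [ZMod.χ₄_nat_one_mod_four h, ← jacobiSym.quadratic_reciprocity_one_mod_four h (by decide), e0]
      rfl
    · rw [ZMod.χ₄_nat_three_mod_four h, jacobiSym.quadratic_reciprocity_three_mod_four (by norm_num) h, e0]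
      rfl
  have hs := ZMod.isSquare_of_jacobiSym_eq_one e3
  obtain ⟨b, hb⟩ := hs
  obtain ⟨β, rfl⟩ := ZMod.intCast_surjective b
  refine ⟨β, ?_⟩
  rw [← ZMod.intCast_zmod_eq_zero_iff_dvd]
  push_cast at hb ⊢
  linear_combination -hb

/-- differences of numbers below the integer square root -/
theorem sqrt_diff (N a b : ℕ) (ha : a < N.sqrt + 1) (hb : b < N.sqrt + 1) :
    ((a : ℤ) - b) ^ 2 ≤ N := by
  have h1 : (N.sqrt : ℤ) * N.sqrt ≤ N := by exact_mod_cast Nat.sqrt_le N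
  have h2 : (a : ℤ) ≤ N.sqrt := by exact_mod_cast Nat.lt_succ_iff.1 ha
  have h3 : (b : ℤ) ≤ N.sqrt := by exact_mod_cast Nat.lt_succ_iff.1 hb
  have : |(a : ℤ) - b| ≤ N.sqrt := by rw [abs_le]; constructor <;> omega
  have := abs_le_abs (a := |(a : ℤ) - b|) (b := N.sqrt) this (by have := abs_nonneg ((a : ℤ) - b); omega)
  rw [abs_abs] at this
  have := sq_le_sq.2 this
  nlinarith

theorem lt_sqrt_sq (N : ℕ) : N < (N.sqrt + 1) ^ 2 := by
  rw [pow_two]; exact Nat.lt_succ_sqrt N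

theorem thue3 (q : ℕ) (hq : q.Prime) (h2 : q % 2 = 1) (h3 : q % 3 = 1) :
    ∃ y z : ℤ, (q : ℤ) = y ^ 2 + 3 * z ^ 2 := by
  obtain ⟨β, hβ⟩ := neg_three_sq q hq h2 h3
  have := Fact.mk hq
  obtain ⟨u, hu, v, hv, huv, he⟩ := Finset.exists_ne_map_eq_of_card_lt_of_maps_to
    (s := Finset.range (q.sqrt + 1) ×ˢ Finset.range (q.sqrt + 1))
    (t := (Finset.univ : Finset (ZMod q)))
    (f := fun p => (p.1 : ZMod q) - (β : ZMod q) * (p.2 : ZMod q))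
    (by simpa [ZMod.card, ← pow_two] using lt_sqrt_sq q) (fun _ _ => Finset.mem_univ _)
  obtain ⟨u1, u2⟩ := u
  obtain ⟨v1, v2⟩ := v
  simp only [Finset.mem_product, Finset.mem_range] at hu hv he
  have b1 := sqrt_diff q u1 v1 hu.1 hv.1
  have b2 := sqrt_diff q u2 v2 hu.2 hv.2
  obtain ⟨y, hy⟩ : ∃ y, y = (u1 : ℤ) - v1 := ⟨_, rfl⟩
  obtain ⟨z, hz⟩ : ∃ z, z = (u2 : ℤ) - v2 := ⟨_, rfl⟩
  have hne : ¬ (y = 0 ∧ z = 0) := by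
    rintro ⟨h, h'⟩
    apply huv
    ext <;> simp <;> omega
  have hd : (q : ℤ) ∣ y - β * z := by
    rw [← ZMod.intCast_zmod_eq_zero_iff_dvd, hy, hz]
    push_cast
    linear_combination he
  rw [← hy] at b1
  rw [← hz] at b2
  have hk : (q : ℤ) ∣ y ^ 2 + 3 * z ^ 2 := by
    have : y ^ 2 + 3 * z ^ 2 = (y - β * z) * (y + β * z) + (β ^ 2 + 3) * z ^ 2 := by ring
    rw [this]
    exact dvd_add (hd.mul_right _) (hβ.mul_right _)
  obtain ⟨k, hk⟩ := hk
  have hq0 : (0 : ℤ) < q := by exact_mod_cast hq.pos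
  have hkpos : 0 < k := by
    have : 0 < y ^ 2 + 3 * z ^ 2 := by
      by_cases h : y = 0
      · have : z ≠ 0 := fun h' => hne ⟨h, h'⟩
        positivity
      · positivity
    rw [hk] at this
    exact pos_of_mul_pos_right this hq0.le
  have hsq : ∀ w : ℤ, w ^ 2 ≠ q := by
    intro w hw
    have := (Nat.prime_iff_prime_int.1 hq).irreducible
    rw [← hw] at this
    exact not_irreducible_pow (by norm_num) this
  have hk4 : k < 4 := by
    have h1 := lt_of_le_of_ne b1 (hsq y)
    by_contra hc
    push Not at hc
    nlinarith
  have hqo : (q : ℤ) % 2 = 1 := by omega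
  interval_cases k
  · exact ⟨y, z, by linarith⟩
  · exfalso
    obtain ⟨t, ht⟩ : ∃ t, (q : ℤ) = 2 * t + 1 := ⟨q / 2, by omega⟩
    rw [ht] at hk
    rcases Int.even_or_odd' y with ⟨c, rfl | rfl⟩ <;> rcases Int.even_or_odd' z with ⟨d, rfl | rfl⟩ <;>
      ring_nf at hk <;> omega
  · have : (3 : ℤ) ∣ y := by
      have : (3 : ℤ) ∣ y ^ 2 := ⟨q - z ^ 2, by linarith⟩
      exact Int.prime_three.dvd_of_dvd_pow this
    obtain ⟨w, rfl⟩ := this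
    exact ⟨z, w, by linarith⟩

theorem not_sq_mod4 (w : ℤ) (N : ℤ) (h : N % 4 = 3 ∨ N % 4 = 2) : w ^ 2 ≠ N := by
  intro hw
  rcases Int.even_or_odd' w with ⟨c, rfl | rfl⟩ <;> ring_nf at hw <;> omega

theorem legendre_step (n q : ℕ) (hn : n % 4 = 3) (hq : q.Prime) (h2 : q % 2 = 1)
    (hnq : n ∣ q + 2) (hs : IsSquare (n : ZMod q)) :
    ∃ T X W : ℤ, 0 < T ∧ (n : ℤ) * T ^ 2 = X ^ 2 + 2 * q * W ^ 2 := by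
  -- square root of n modulo 2q
  obtain ⟨α, hα⟩ : ∃ α : ℤ, (2 * q : ℤ) ∣ α ^ 2 - n := by
    obtain ⟨b, hb⟩ := hs
    obtain ⟨β, rfl⟩ := ZMod.intCast_surjective b
    have h1 : (q : ℤ) ∣ β ^ 2 - n := by
      rw [← ZMod.intCast_zmod_eq_zero_iff_dvd]
      push_cast
      linear_combination -hb
    have hc : IsCoprime (2 : ℤ) q := by
      rw [show (2 : ℤ) = ((2 : ℕ) : ℤ) by norm_num, Nat.isCoprime_iff_coprime, Nat.coprime_two_left]
      exact Nat.odd_iff.2 h2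
    rcases Int.even_or_odd' β with ⟨c, hc' | hc'⟩
    · refine ⟨β + q, hc.mul_dvd ?_ ?_⟩
      · obtain ⟨t, ht⟩ : ∃ t, (q : ℤ) = 2 * t + 1 := ⟨q / 2, by omega⟩
        obtain ⟨s, hs⟩ : ∃ s, (n : ℤ) = 2 * s + 1 := ⟨n / 2, by omega⟩
        rw [hc', ht, hs]
        exact ⟨2 * c ^ 2 + 2 * c * (2 * t + 1) + 2 * t ^ 2 + 2 * t - s, by ring⟩
      · have : (β + q) ^ 2 - n = (β ^ 2 - n) + q * (2 * β + q) := by ring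
        rw [this]
        exact dvd_add h1 (dvd_mul_right _ _)
    · refine ⟨β, hc.mul_dvd ?_ h1⟩
      obtain ⟨s, hs⟩ : ∃ s, (n : ℤ) = 2 * s + 1 := ⟨n / 2, by omega⟩
      rw [hc', hs]
      exact ⟨2 * c ^ 2 + 2 * c - s, by ring⟩
  have hq0 : 0 < q := hq.pos
  have : NeZero (2 * q) := ⟨by omega⟩
  have : NeZero n := ⟨by omega⟩
  obtain ⟨u, hu, v, hv, huv, he⟩ := Finset.exists_ne_map_eq_of_card_lt_of_maps_to
    (s := Finset.range ((2 * q * n).sqrt + 1) ×ˢ Finset.range ((2 * q).sqrt + 1) ×ˢ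
      Finset.range (n.sqrt + 1))
    (t := (Finset.univ : Finset (ZMod (2 * q) × ZMod n)))
    (f := fun p => ((p.1 : ZMod (2 * q)) - (α : ZMod (2 * q)) * (p.2.1 : ZMod (2 * q)),
      (p.1 : ZMod n) - 2 * (p.2.2 : ZMod n)))
    (by
      simp only [Finset.card_univ, Fintype.card_prod, ZMod.card, Finset.card_product,
        Finset.card_range]
      have h1 := lt_sqrt_sq (2 * q * n)
      have h2 := lt_sqrt_sq (2 * q)
      have h3 := lt_sqrt_sq n
      apply lt_of_pow_lt_pow_left₀ 2 (by positivity)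
      calc (2 * q * n) ^ 2 = (2 * q * n) * ((2 * q) * n) := by ring
        _ < ((2 * q * n).sqrt + 1) ^ 2 * (((2 * q).sqrt + 1) ^ 2 * (n.sqrt + 1) ^ 2) := by
          apply Nat.mul_lt_mul'' h1
          exact Nat.mul_lt_mul'' h2 h3
        _ = _ := by ring) (fun _ _ => Finset.mem_univ _)
  obtain ⟨u1, u2, u3⟩ := u
  obtain ⟨v1, v2, v3⟩ := v
  simp only [Finset.mem_product, Finset.mem_range, Prod.mk.injEq] at hu hv he
  have b1 := sqrt_diff _ u1 v1 hu.1 hv.1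
  have b2 := sqrt_diff _ u2 v2 hu.2.1 hv.2.1
  have b3 := sqrt_diff _ u3 v3 hu.2.2 hv.2.2
  obtain ⟨x, hx⟩ : ∃ y, y = (u1 : ℤ) - v1 := ⟨_, rfl⟩
  obtain ⟨t, ht⟩ : ∃ z, z = (u2 : ℤ) - v2 := ⟨_, rfl⟩
  obtain ⟨w, hw⟩ : ∃ z, z = (u3 : ℤ) - v3 := ⟨_, rfl⟩
  have hne : ¬ (x = 0 ∧ t = 0 ∧ w = 0) := by
    rintro ⟨h, h', h''⟩
    apply huv
    ext <;> simp <;> omega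
  have d1 : ((2 * q : ℕ) : ℤ) ∣ x - α * t := by
    rw [← ZMod.intCast_zmod_eq_zero_iff_dvd, hx, ht]
    push_cast
    linear_combination he.1
  have d2 : (n : ℤ) ∣ x - 2 * w := by
    rw [← ZMod.intCast_zmod_eq_zero_iff_dvd, hx, hw]
    push_cast
    linear_combination he.2
  rw [← hx] at b1
  rw [← ht] at b2
  rw [← hw] at b3
  clear hx ht hw he hu hv huv
  push_cast at b1 b2 b3 d1
  have hnq' : (n : ℤ) ∣ q + 2 := by exact_mod_cast hnq
  have D1 : (2 * q : ℤ) ∣ x ^ 2 - n * t ^ 2 + 2 * q * w ^ 2 := by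
    have : x ^ 2 - n * t ^ 2 + 2 * q * w ^ 2 =
      (x - α * t) * (x + α * t) + (α ^ 2 - n) * t ^ 2 + 2 * q * w ^ 2 := by ring
    rw [this]
    exact dvd_add (dvd_add (d1.mul_right _) (hα.mul_right _)) (dvd_mul_right _ _)
  have D2 : (n : ℤ) ∣ x ^ 2 - n * t ^ 2 + 2 * q * w ^ 2 := by
    have : x ^ 2 - n * t ^ 2 + 2 * q * w ^ 2 =
      (x - 2 * w) * (x + 2 * w) - n * t ^ 2 + (q + 2) * (2 * w ^ 2) := by ring
    rw [this]
    exact dvd_add (dvd_sub (d2.mul_right _) (dvd_mul_right _ _)) (hnq'.mul_right _)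
  have hcop : IsCoprime (2 * q : ℤ) n := by
    have c2 : Nat.Coprime 2 n := Nat.coprime_two_left.2 (Nat.odd_iff.2 (by omega))
    have cq : Nat.Coprime q n := by
      have hg : Nat.gcd q n ∣ 2 :=
        (Nat.dvd_add_right (Nat.gcd_dvd_left q n)).1 ((Nat.gcd_dvd_right q n).trans hnq)
      have := Nat.dvd_gcd hg (Nat.gcd_dvd_right q n)
      rw [Nat.Coprime] at c2
      rw [c2] at this
      exact Nat.dvd_one.1 this
    have := Nat.isCoprime_iff_coprime.2 (Nat.Coprime.mul_left c2 cq)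
    exact_mod_cast this
  obtain ⟨k, hk⟩ := hcop.mul_dvd D1 D2
  have hQ : (0 : ℤ) < q := by exact_mod_cast hq0
  have hN : (0 : ℤ) < n := by exact_mod_cast (by omega : 0 < n)
  have b2' : t ^ 2 < 2 * q := lt_of_le_of_ne b2 (not_sq_mod4 t _ (by omega))
  have b3' : w ^ 2 < n := lt_of_le_of_ne b3 (not_sq_mod4 w _ (by omega))
  have hM : (0 : ℤ) < 2 * q * n := by positivity
  have m2 : n * t ^ 2 < n * (2 * q) := mul_lt_mul_of_pos_left b2' hN
  have m3 : 2 * q * w ^ 2 < 2 * q * n := mul_lt_mul_of_pos_left b3' (by positivity)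
  have n2 : 0 ≤ n * t ^ 2 := by positivity
  have n3 : 0 ≤ 2 * q * w ^ 2 := by positivity
  have n1 : 0 ≤ x ^ 2 := by positivity
  have k1 : -1 < k := by
    by_contra hc
    push Not at hc
    have := mul_le_mul_of_nonneg_left hc hM.le
    linarith
  have k2 : k < 2 := by
    by_contra hc
    push Not at hc
    have := mul_le_mul_of_nonneg_left hc hM.le
    linarith
  interval_cases k
  · have ht0 : t ≠ 0 := by
      rintro rfl
      have hx0 : x = 0 := by
        have : x ^ 2 = 0 := by linarith
        exact (pow_eq_zero_iff two_ne_zero).1 this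
      have hw0 : w = 0 := by
        have : 2 * q * w ^ 2 = 0 := by linarith
        have : w ^ 2 = 0 := by
          rcases mul_eq_zero.1 this with h | h
          · omega
          · exact h
        exact (pow_eq_zero_iff two_ne_zero).1 this
      exact hne ⟨hx0, rfl, hw0⟩
    refine ⟨|t|, x, w, abs_pos.2 ht0, ?_⟩
    rw [sq_abs]; linarith
  · refine ⟨t ^ 2 + 2 * q, x * t + 2 * q * w, w * t - x, by positivity, ?_⟩
    linear_combination (-(t ^ 2 + 2 * q : ℤ)) * hk

theorem rep126 (n : ℤ) (h0 : 0 ≤ n) (hn : n % 4 = 3) :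
    ∃ x y z : ℤ, n = x ^ 2 + 2 * y ^ 2 + 6 * z ^ 2 := by
  lift n to ℕ using h0
  have hn' : n % 4 = 3 := by omega
  obtain ⟨q, hq, h2, h3, hd, hs⟩ := exists_q n hn'
  obtain ⟨y, z, hyz⟩ := thue3 q hq h2 h3
  obtain ⟨T, X, W, hT, h⟩ := legendre_step n q hn' hq h2 hd hs
  obtain ⟨x, a, b, hx⟩ := dc n _ T X (y * W - z * W) (2 * (z * W)) hT rfl
    (by rw [h, hyz]; ring)
  obtain ⟨y', z', h'⟩ := hex_to a b
  exact ⟨x, y', z', by rw [hx, h']; ring⟩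

theorem polygonal_eq (m x : ℤ) : ∃ e, x ^ 2 - x = 2 * e ∧ polygonal m x = (m - 2) * e + x := by
  have : Even (x ^ 2 - x) := by
    rw [pow_two, show x * x - x = (x - 1) * (x - 1 + 1) by ring]
    exact Int.even_mul_succ_self _
  obtain ⟨e, he⟩ := this
  refine ⟨e, by omega, ?_⟩
  unfold polygonal
  apply Int.ediv_eq_of_eq_mul_right two_ne_zero
  linear_combination (m - 2) * he

theorem finish (m A B x₁ x₂ x₃ x₄ : ℤ) (h1 : x₁ + 2 * x₂ + 2 * x₃ + 3 * x₄ = B)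
    (h2 : x₁ ^ 2 + 2 * x₂ ^ 2 + 2 * x₃ ^ 2 + 3 * x₄ ^ 2 = 2 * A + B) :
    polygonal m x₁ + 2 * polygonal m x₂ + 2 * polygonal m x₃ + 3 * polygonal m x₄ =
        A * (m - 2) + B := by
  obtain ⟨e1, f1, g1⟩ := polygonal_eq m x₁
  obtain ⟨e2, f2, g2⟩ := polygonal_eq m x₂
  obtain ⟨e3, f3, g3⟩ := polygonal_eq m x₃
  obtain ⟨e4, f4, g4⟩ := polygonal_eq m x₄
  have : e1 + 2 * e2 + 2 * e3 + 3 * e4 = A := by linarith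
  rw [g1, g2, g3, g4]
  linear_combination (m - 2) * this + h1

/-- Reconstruction: `r = B - 4 s`, `s = x₂ + x₃`, `d = x₂ - x₃`, `q = x₁ - x₄`. -/
theorem reconstruct (m A B r q d s : ℤ) (hr : r = B - 4 * s) (hsd : (s - d) % 2 = 0)
    (hq : (B - 2 * s - q) % 4 = 0) (h : 16 * A + 8 * B - B ^ 2 = r ^ 2 + 6 * q ^ 2 + 8 * d ^ 2) :
    ∃ x₁ x₂ x₃ x₄ : ℤ,
      polygonal m x₁ + 2 * polygonal m x₂ + 2 * polygonal m x₃ + 3 * polygonal m x₄ =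
        A * (m - 2) + B := by
  obtain ⟨c, hc⟩ := Int.dvd_of_emod_eq_zero hsd
  obtain ⟨t, ht⟩ := Int.dvd_of_emod_eq_zero hq
  obtain rfl : s = d + 2 * c := by linarith
  obtain rfl : q = B - 2 * (d + 2 * c) - 4 * t := by linarith
  refine ⟨B - 2 * (d + 2 * c) - 3 * t, d + c, c, t, finish m A B _ _ _ _ (by ring) ?_⟩
  subst hr
  nlinarith

theorem case_odd (m A B : ℤ) (hd : 0 ≤ 16 * A + 8 * B - B ^ 2) (hB : B % 2 = 1) :
    ∃ x₁ x₂ x₃ x₄ : ℤ,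
      polygonal m x₁ + 2 * polygonal m x₂ + 2 * polygonal m x₃ + 3 * polygonal m x₄ =
        A * (m - 2) + B := by
  obtain ⟨b, rfl⟩ : ∃ b, B = 2 * b + 1 := ⟨B / 2, by omega⟩
  obtain ⟨g, hg⟩ : ∃ g, b ^ 2 + b = 2 * g := by
    obtain ⟨g, hg⟩ := Int.even_mul_succ_self b
    exact ⟨g, by linarith⟩
  have hD : 16 * A + 8 * (2 * b + 1) - (2 * b + 1) ^ 2 = 8 * (2 * A + 2 * b + 1 - g) - 1 := by
    linear_combination -4 * hg
  obtain ⟨x, y, z, h⟩ := rep126 _ hd (by omega)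
  have parity : ∀ w : ℤ, (∃ c, w = 2 * c ∧ ∃ e, w ^ 2 = 4 * e) ∨
      (w % 2 = 1 ∧ ∃ e, w ^ 2 = 8 * e + 1) := by
    intro w
    rcases Int.even_or_odd' w with ⟨c, hc | hc⟩
    · exact Or.inl ⟨c, hc, c ^ 2, by rw [hc]; ring⟩
    · obtain ⟨e, he⟩ := Int.even_mul_succ_self c
      exact Or.inr ⟨by omega, e, by rw [hc]; linear_combination 4 * he⟩
  have hxo : x % 2 = 1 := by
    rcases parity x with ⟨c, hc, e, he⟩ | ⟨hx, _⟩
    · omega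
    · exact hx
  obtain ⟨hzo, d, rfl⟩ : z % 2 = 1 ∧ ∃ d, y = 2 * d := by
    rcases parity x with ⟨_, hc, e1, he1⟩ | ⟨hx, e1, he1⟩ <;>
    rcases parity y with ⟨c2, hc2, e2, he2⟩ | ⟨hy, e2, he2⟩ <;>
    rcases parity z with ⟨_, hc3, e3, he3⟩ | ⟨hz, e3, he3⟩ <;>
    first
    | exact ⟨hz, c2, hc2⟩
    | (exfalso; omega)
  -- choose signs
  obtain ⟨r, s, hrs, hr2⟩ : ∃ r s : ℤ, r = (2 * b + 1) - 4 * s ∧ r ^ 2 = x ^ 2 := by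
    rcases (show (2 * b + 1 - x) % 4 = 0 ∨ (2 * b + 1 + x) % 4 = 0 by omega) with h' | h'
    · exact ⟨x, (2 * b + 1 - x) / 4, by omega, rfl⟩
    · exact ⟨-x, (2 * b + 1 + x) / 4, by omega, by ring⟩
  obtain ⟨q, hq, hq2⟩ : ∃ q : ℤ, (2 * b + 1 - 2 * s - q) % 4 = 0 ∧ q ^ 2 = z ^ 2 := by
    rcases (show (2 * b + 1 - 2 * s - z) % 4 = 0 ∨ (2 * b + 1 - 2 * s + z) % 4 = 0 by omega)
      with h' | h'
    · exact ⟨z, h', rfl⟩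
    · exact ⟨-z, by simpa using h', by ring⟩
  refine reconstruct m A _ r q d s hrs ?_ hq (by rw [h, hr2, hq2]; ring)
  rcases parity z with ⟨c, hc, e, he⟩ | ⟨_, e, he⟩
  · omega
  have e1 : r ^ 2 = 8 * g + 1 - 8 * (2 * (b * s)) - 8 * s + 16 * s ^ 2 := by
    rw [hrs]; linear_combination 4 * hg
  rw [hD, ← hr2, e1, he] at h
  obtain ⟨f, hf⟩ := Int.even_mul_succ_self d
  generalize b * s = bs at h
  generalize s ^ 2 = ss at h
  have : (2 * d) ^ 2 = 4 * (f + f - d) := by linear_combination 4 * hf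
  rw [this] at h
  omega

theorem case_two (m A B : ℤ) (hd : 0 ≤ 16 * A + 8 * B - B ^ 2) (hB : B % 4 = 2) :
    ∃ x₁ x₂ x₃ x₄ : ℤ,
      polygonal m x₁ + 2 * polygonal m x₂ + 2 * polygonal m x₃ + 3 * polygonal m x₄ =
        A * (m - 2) + B := by
  obtain ⟨b, rfl⟩ : ∃ b, B = 2 * (2 * b + 1) := ⟨B / 4, by omega⟩
  have hD : 16 * A + 8 * (2 * (2 * b + 1)) - (2 * (2 * b + 1)) ^ 2 =
    4 * (4 * (A + 2 * b + 1 - b ^ 2 - b) - 1) := by ring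
  obtain ⟨x, y, z, h⟩ := rep126 (4 * (A + 2 * b + 1 - b ^ 2 - b) - 1) (by omega) (by omega)
  have parity : ∀ w : ℤ, (w % 2 = 0 ∧ ∃ e, w ^ 2 = 4 * e) ∨ (w % 2 = 1 ∧ ∃ e, w ^ 2 = 4 * e + 1) := by
    intro w
    rcases Int.even_or_odd' w with ⟨c, hc | hc⟩
    · exact Or.inl ⟨by omega, c ^ 2, by rw [hc]; ring⟩
    · exact Or.inr ⟨by omega, c ^ 2 + c, by rw [hc]; ring⟩
  obtain ⟨hxo, hyz⟩ : x % 2 = 1 ∧ (y + z) % 2 = 1 := by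
    generalize b ^ 2 = bb at h
    rcases parity x with ⟨hx, e1, he1⟩ | ⟨hx, e1, he1⟩ <;>
    rcases parity y with ⟨hy, e2, he2⟩ | ⟨hy, e2, he2⟩ <;>
    rcases parity z with ⟨hz, e3, he3⟩ | ⟨hz, e3, he3⟩ <;>
    omega
  obtain ⟨r, s, hrs, hr2, hs⟩ : ∃ r s : ℤ, r = (2 * b + 1) - 2 * s ∧ r ^ 2 = x ^ 2 ∧
      (s - y) % 2 = 0 := by
    rcases (show ((2 * b + 1 - x) / 2 - y) % 2 = 0 ∨ ((2 * b + 1 + x) / 2 - y) % 2 = 0 by omega)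
      with h' | h'
    · exact ⟨x, (2 * b + 1 - x) / 2, by omega, rfl, h'⟩
    · exact ⟨-x, (2 * b + 1 + x) / 2, by omega, by ring, h'⟩
  refine reconstruct m A _ (2 * r) (2 * z) y s (by rw [hrs]; ring) hs (by omega) ?_
  rw [hD, h, ← hr2]; ring

theorem rep_1223 (m : ℤ) (hm : 3 ≤ m) (A B : ℤ) (hA : 0 ≤ A)
    (hd : 0 ≤ 16 * A + 8 * B - B ^ 2)
    (hmod : ¬ (B % 4 = 0)) :
    ∃ x₁ x₂ x₃ x₄ : ℤ,
      polygonal m x₁ + 2 * polygonal m x₂ + 2 * polygonal m x₃ + 3 * polygonal m x₄ =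
        A * (m - 2) + B := by
  rcases (show B % 2 = 1 ∨ B % 4 = 2 by omega) with h | h
  · exact case_odd m A B hd h
  · exact case_two m A B hd h
end
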